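/- With the trinomial-curve notation, the double sum over i = 0, ..., q−2 and j = 0, ..., q−2 of |C*_{ij}|^2 equals (q−1)^2 · [ (q−1)^2 − (q−1)(d + e + f) + q·k ]. -/

import Mathlib

/-!
Write `m = q - 1`, `φ (x, y) = x ^ b11 * y ^ b12` and `ψ (x, y) = x ^ b21 * y ^ b22`, two
homomorphisms `Fˣ × Fˣ → Fˣ`. Dividing by the third monomial, `|C*_{ij}|` is the number of `P` with
`u φ(P) + v ψ(P) = 1`, where `u = ρ ^ i` and `v = ρ ^ j` run over all of `Fˣ`. The sum of squares
therefore counts `(u, v, P, Q)` with `u φ(P) + v ψ(P) = 1 = u φ(Q) + v ψ(Q)`. Substituting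
`Q = P R` and absorbing `φ(P)`, `ψ(P)` into `u`, `v` makes it `m ^ 2` times the sum over `R` of the
number of unit solutions of `u + v = 1 = u s + v t`, with `s = φ(R)` and `t = ψ(R)`
(`sum_sq_eq`). That number is `1 - [s = 1] - [t = 1] - [s = t] + q [s = t = 1]` (`sum_two_lines`).

It remains to count, in the cyclic group `Fˣ`, the solutions of one monomial equation
(`sum_monomial_eq_one`, giving `m d`, `m e`, `m f`) and the common kernel of `φ` and `ψ`
(`sum_monomial_pair_eq_one`, giving `k`). In both cases a unimodular change of variables
(`sum_monomial_change`) turns the first monomial into `u ^ h` with `h = gcd(b11, b12)` and the second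
into `u ^ c * v ^ e` with `h e = det B`. With `e' = gcd(e, m)`, the second equation is solvable in
`v` iff `u ^ (c m / e') = 1`, and then has `e'` solutions, so the kernel has
`e' gcd(h, c m / e', m)` elements, which is `gcd(m gcd(b11, b12, b21, b22, m), det B)`.
-/

/-! ### Monomial equations in a cyclic group -/

section CyclicCounting

variable {G : Type*} [CommGroup G]

theorem monomial_comp (x y : G) (i j i' j' k l : ℤ) :
    (x ^ i * y ^ j) ^ k * (x ^ i' * y ^ j') ^ l
      = x ^ (i * k + i' * l) * y ^ (j * k + j' * l) := by
  simp only [mul_zpow, zpow_add, ← zpow_mul]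
  exact mul_mul_mul_comm _ _ _ _

variable [Fintype G]

/-- Substitution along the unimodular map `x = u ^ s * v ^ (-β)`, `y = u ^ t * v ^ α`, whose inverse is
`u = x ^ α * y ^ β`, `v = x ^ (-t) * y ^ s`; it removes `v` from the first monomial. -/
theorem sum_monomial_change (a b c d s t α β : ℤ) (h : ℤ) (ha : a = h * α) (hb : b = h * β)
    (hst : s * α + t * β = 1) (φ : G → G → ℤ) :
    ∑ x : G, ∑ y : G, φ (x ^ a * y ^ b) (x ^ c * y ^ d)
      = ∑ u : G, ∑ v : G, φ (u ^ h) (u ^ (c * s + d * t) * v ^ (d * α - c * β)) := by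
  let E : G × G ≃ G × G :=
    { toFun := fun p => (p.1 ^ s * p.2 ^ (-β), p.1 ^ t * p.2 ^ α)
      invFun := fun p => (p.1 ^ α * p.2 ^ β, p.1 ^ (-t) * p.2 ^ s)
      left_inv := by
        rintro ⟨u, v⟩
        have e1 : s * α + t * β = 1 := hst
        have e2 : -β * α + α * β = 0 := by ring
        have e3 : s * -t + t * s = 0 := by ring
        have e4 : -β * -t + α * s = 1 := by linarith
        simp only [monomial_comp, e1, e2, e3, e4, zpow_one, zpow_zero, mul_one, one_mul]
      right_inv := by
        rintro ⟨u, v⟩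
        have e1 : α * s + -t * -β = 1 := by linarith
        have e2 : β * s + s * -β = 0 := by ring
        have e3 : α * t + -t * α = 0 := by ring
        have e4 : β * t + s * α = 1 := by linarith
        simp only [monomial_comp, e1, e2, e3, e4, zpow_one, zpow_zero, mul_one, one_mul] }
  rw [← Fintype.sum_prod_type', ← Fintype.sum_prod_type',
    ← E.sum_comp (fun p : G × G => φ (p.1 ^ a * p.2 ^ b) (p.1 ^ c * p.2 ^ d))]
  refine Finset.sum_congr rfl fun p _ => ?_
  have e1 : s * a + t * b = h := by rw [ha, hb]; linear_combination h * hst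
  have e2 : -β * a + α * b = 0 := by rw [ha, hb]; ring
  have e3 : s * c + t * d = c * s + d * t := by ring
  have e4 : -β * c + α * d = d * α - c * β := by ring
  simp only [E, Equiv.coe_fn_mk, monomial_comp, e1, e2, e3, e4, zpow_zero, mul_one]

variable [IsCyclic G]

/-- In a cyclic group of order `m`, the `e`-th powers are the elements killed by `m / gcd(e, m)`. -/
theorem exists_zpow_eq_iff (e : ℤ) (w : G) :
    (∃ v : G, v ^ e = w) ↔ w ^ ((Fintype.card G : ℤ) / Int.gcd e (Fintype.card G)) = 1 := by
  set m : ℤ := (Fintype.card G : ℤ) with hm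
  have hm0 : m ≠ 0 := by simp [hm]
  have hpow : ∀ x : G, x ^ m = 1 := fun x => by simp [hm]
  obtain ⟨M, hM⟩ : (Int.gcd e m : ℤ) ∣ m := Int.gcd_dvd_right ..
  obtain ⟨r, hr⟩ : (Int.gcd e m : ℤ) ∣ e := Int.gcd_dvd_left ..
  have hg0 : (Int.gcd e m : ℤ) ≠ 0 := fun h => hm0 (by rw [hM, h, zero_mul])
  have hdiv : m / Int.gcd e m = M := Int.ediv_eq_of_eq_mul_right hg0 hM
  have hbez := Int.gcd_eq_gcd_ab e m
  rw [hdiv]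
  constructor
  · rintro ⟨v, rfl⟩
    rw [← zpow_mul, show e * M = m * r by linear_combination M * hr - r * hM, zpow_mul, hpow, one_zpow]
  · intro hw
    obtain ⟨g, hg⟩ := IsCyclic.exists_generator (α := G)
    obtain ⟨z, rfl⟩ := Subgroup.mem_zpowers_iff.1 (hg w)
    have hdvd : m ∣ z * M := by
      rw [← zpow_mul, ← orderOf_dvd_iff_zpow_eq_one, orderOf_eq_card_of_forall_mem_zpowers hg,
        Nat.card_eq_fintype_card] at hw
      exact hw
    have hM0 : M ≠ 0 := fun h => hm0 (by rw [hM, h, mul_zero])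
    have : (Int.gcd e m : ℤ) ∣ z := by
      rw [hM] at hdvd
      exact Int.dvd_of_mul_dvd_mul_right hM0 hdvd
    obtain ⟨z', rfl⟩ := this
    refine ⟨g ^ (Int.gcdA e m * z'), ?_⟩
    rw [← zpow_mul, show Int.gcdA e m * z' * e = (Int.gcd e m : ℤ) * z' + m * (-(Int.gcdB e m * z')) by
      linear_combination (-z') * hbez, zpow_add, zpow_mul g m, hpow, one_zpow, mul_one]

variable [DecidableEq G]

theorem sum_zpow_eq_one (n : ℤ) :
    ∑ u : G, (if u ^ n = 1 then (1 : ℤ) else 0) = Int.gcd n (Fintype.card G) := by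
  have h := IsCyclic.card_powMonoidHom_ker (G := G) n.natAbs
  rw [Finset.sum_boole, Int.gcd_eq_natAbs, Int.natAbs_natCast, Nat.gcd_comm,
    ← Nat.card_eq_fintype_card, ← h, ← Fintype.card_subtype, ← Nat.card_eq_fintype_card]
  refine congrArg _ (Nat.card_congr (Equiv.subtypeEquivRight fun u => ?_))
  rw [MonoidHom.mem_ker, powMonoidHom_apply, pow_natAbs_eq_one]

theorem sum_mul_zpow_eq_one (e : ℤ) (w : G) :
    ∑ v : G, (if w * v ^ e = 1 then (1 : ℤ) else 0)
      = if w ^ ((Fintype.card G : ℤ) / Int.gcd e (Fintype.card G)) = 1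
        then (Int.gcd e (Fintype.card G) : ℤ) else 0 := by
  by_cases h : ∃ v : G, v ^ e = w
  · rw [if_pos ((exists_zpow_eq_iff e w).1 h)]
    obtain ⟨v₀, rfl⟩ := h
    rw [← sum_zpow_eq_one]
    exact Fintype.sum_equiv (Equiv.mulLeft v₀) _ _ fun v => by simp [mul_zpow]
  · rw [if_neg (fun h' => h ((exists_zpow_eq_iff e w).2 h'))]
    refine Finset.sum_eq_zero fun v _ => if_neg fun hv => h ⟨v⁻¹, ?_⟩
    rw [inv_zpow]
    exact (eq_inv_of_mul_eq_one_left hv).symm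

/-- Bézout's identity after division by the gcd: the data required by `sum_monomial_change`. -/
theorem exists_bezout (a b : ℤ) (hab : a ≠ 0 ∨ b ≠ 0) :
    ∃ α β s t : ℤ, a = Int.gcd a b * α ∧ b = Int.gcd a b * β ∧ s * α + t * β = 1 := by
  obtain ⟨α, hα⟩ : (Int.gcd a b : ℤ) ∣ a := Int.gcd_dvd_left ..
  obtain ⟨β, hβ⟩ : (Int.gcd a b : ℤ) ∣ b := Int.gcd_dvd_right ..
  have hg0 : (Int.gcd a b : ℤ) ≠ 0 := by
    rw [Ne, Int.natCast_eq_zero, Int.gcd_eq_zero_iff]; tauto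
  refine ⟨α, β, Int.gcdA a b, Int.gcdB a b, hα, hβ, mul_left_cancel₀ hg0 ?_⟩
  have := Int.gcd_eq_gcd_ab a b
  linear_combination -this - Int.gcdA a b * hα - Int.gcdB a b * hβ

theorem sum_monomial_eq_one (a b : ℤ) (hab : a ≠ 0 ∨ b ≠ 0) :
    ∑ x : G, ∑ y : G, (if x ^ a * y ^ b = 1 then (1 : ℤ) else 0)
      = Fintype.card G * Int.gcd a (Int.gcd b (Fintype.card G)) := by
  obtain ⟨α, β, s, t, hα, hβ, hst⟩ := exists_bezout a b hab
  rw [sum_monomial_change a b 0 0 s t α β _ hα hβ hst (fun z _ => if z = 1 then 1 else 0)]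
  simp only [Finset.sum_const, Finset.card_univ, nsmul_eq_mul, ← Finset.mul_sum]
  rw [sum_zpow_eq_one, ← Int.gcd_assoc]

/-- The order of the kernel of the integer matrix with rows `(a, b)`, `(c, d)` acting on the square of a
cyclic group. -/
theorem sum_monomial_pair_eq_one (a b c d : ℤ) (hab : a ≠ 0 ∨ b ≠ 0) :
    ∑ x : G, ∑ y : G, (if x ^ a * y ^ b = 1 ∧ x ^ c * y ^ d = 1 then (1 : ℤ) else 0)
      = Int.gcd ((Fintype.card G : ℤ) * Int.gcd (Int.gcd a (Int.gcd b (Fintype.card G)))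
          (Int.gcd c (Int.gcd d (Fintype.card G)))) (a * d - b * c) := by
  obtain ⟨α, β, s, t, hα, hβ, hst⟩ := exists_bezout a b hab
  rw [sum_monomial_change a b c d s t α β _ hα hβ hst (fun z w => if z = 1 ∧ w = 1 then 1 else 0)]
  set h : ℤ := (Int.gcd a b : ℤ)
  set m : ℤ := (Fintype.card G : ℤ) with hm
  set C := c * s + d * t with hC
  set e := d * α - c * β with he
  have step : ∀ u : G, ∑ v : G, (if u ^ h = 1 ∧ u ^ C * v ^ e = 1 then (1 : ℤ) else 0)
      = Int.gcd e m * if u ^ (Int.gcd h (C * (m / Int.gcd e m)) : ℤ) = 1 then 1 else 0 := by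
    intro u
    have hg : u ^ (Int.gcd h (C * (m / Int.gcd e m)) : ℤ) = 1
        ↔ u ^ h = 1 ∧ u ^ (C * (m / Int.gcd e m)) = 1 := by
      simp only [← orderOf_dvd_iff_zpow_eq_one, Int.dvd_coe_gcd_iff]
    by_cases h1 : u ^ h = 1
    · simp only [hg, h1, true_and]
      rw [sum_mul_zpow_eq_one, ← zpow_mul]
      simp [hm]
    · simp [h1]
  rw [Finset.sum_congr rfl fun u _ => step u, ← Finset.mul_sum, sum_zpow_eq_one, ← hm]
  obtain ⟨M, hM⟩ : (Int.gcd e m : ℤ) ∣ m := Int.gcd_dvd_right ..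
  have hm0 : m ≠ 0 := by simp [hm]
  have hg0 : (Int.gcd e m : ℤ) ≠ 0 := fun h => hm0 (by rw [hM, h, zero_mul])
  rw [Int.ediv_eq_of_eq_mul_right hg0 hM]
  have key : ∀ n x y z : ℤ, n ∣ z * (Int.gcd x y : ℤ) ↔ n ∣ z * x ∧ n ∣ z * y := by
    intro n x y z
    rw [← Int.dvd_coe_gcd_iff, Int.gcd_mul_left, Nat.cast_mul, Int.natCast_natAbs]
    rcases abs_choice z with hz | hz <;> simp [hz]
  have key' : ∀ n x y z : ℤ, n ∣ (Int.gcd x y : ℤ) * z ↔ n ∣ x * z ∧ n ∣ y * z := by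
    intro n x y z
    rw [mul_comm, key, mul_comm z, mul_comm z]
  have hdet : a * d - b * c = e * h := by
    rw [he]; linear_combination d * hα - c * hβ
  have hcM : (Int.gcd e m : ℤ) * (C * M) = m * C := by linear_combination -C * hM
  -- Both sides are determined by their divisors `n`: those dividing `m h, m C, m e, m ^ 2, e h` on the
  -- left and `m a, m b, m c, m d, m ^ 2, a d - b c` on the right. These lists generate the same ideal.
  have main : ∀ n : ℤ, n ∣ (Int.gcd e m : ℤ) * Int.gcd (Int.gcd h (C * M)) m ↔
      n ∣ Int.gcd (m * Int.gcd (Int.gcd a (Int.gcd b m)) (Int.gcd c (Int.gcd d m)))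
        (a * d - b * c) := by
    intro n
    rw [Int.dvd_coe_gcd_iff, hdet]
    simp only [key]
    rw [hcM]
    simp only [key']
    have hcc : c = C * α - e * t := by rw [hC, he]; linear_combination -c * hst
    have hdd : d = C * β + e * s := by rw [hC, he]; linear_combination -d * hst
    have hhh : h = s * a + t * b := by linear_combination -h * hst - s * hα - t * hβ
    constructor
    · rintro ⟨⟨⟨heh, hmh⟩, hmC⟩, hem, hmm⟩
      refine ⟨⟨⟨?_, ?_, hmm⟩, ?_, ?_, hmm⟩, heh⟩
      · rw [hα, ← mul_assoc]; exact hmh.mul_right _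
      · rw [hβ, ← mul_assoc]; exact hmh.mul_right _
      · rw [show m * c = m * C * α - e * m * t by linear_combination m * hcc]
        exact dvd_sub (hmC.mul_right _) (hem.mul_right _)
      · rw [show m * d = m * C * β + e * m * s by linear_combination m * hdd]
        exact dvd_add (hmC.mul_right _) (hem.mul_right _)
    · rintro ⟨⟨⟨hma, hmb, hmm⟩, hmc, hmd, -⟩, heh⟩
      refine ⟨⟨⟨heh, ?_⟩, ?_⟩, ?_, hmm⟩
      · rw [show m * h = m * a * s + m * b * t by linear_combination m * hhh]
        exact dvd_add (hma.mul_right _) (hmb.mul_right _)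
      · rw [show m * C = m * c * s + m * d * t by rw [hC]; ring]
        exact dvd_add (hmc.mul_right _) (hmd.mul_right _)
      · rw [show e * m = m * d * α - m * c * β by rw [he]; ring]
        exact dvd_sub (hmd.mul_right _) (hmc.mul_right _)
  exact Int.dvd_antisymm (by positivity) (by positivity) ((main _).1 dvd_rfl) ((main _).2 dvd_rfl)

end CyclicCounting

/-! ### Intersections of lines and the second moment -/

section Field

variable {F : Type*} [Field F] [Fintype F] [DecidableEq F]

/-- The line `u + v = 1` has `q - 2` points with both coordinates nonzero. -/
theorem sum_units_add_eq_one :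
    ∑ u : Fˣ, ∑ v : Fˣ, (if (u : F) + v = 1 then (1 : ℤ) else 0) = Fintype.card F - 2 := by
  have h : ∀ u : Fˣ, ∑ v : Fˣ, (if (u : F) + v = 1 then (1 : ℤ) else 0)
      = 1 - if u = 1 then 1 else 0 := by
    intro u
    by_cases hu : u = 1
    · subst hu; simp
    · have hne : (1 : F) - u ≠ 0 := fun h => hu (Units.ext (by simpa using (sub_eq_zero.1 h).symm))
      rw [Finset.sum_eq_single (Units.mk0 _ hne)]
      · simp [hu]
      · intro v _ hv
        refine if_neg fun h => hv (Units.ext ?_)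
        simp [← h]
      · simp
  have hc : (Fintype.card Fˣ : ℤ) = Fintype.card F - 1 := by
    rw [Fintype.card_units, Nat.cast_sub Fintype.card_pos, Nat.cast_one]
  simp only [h, Finset.sum_sub_distrib]
  simp [hc]
  ring

/-- The number of common points, with nonzero coordinates, of the lines `u + v = 1` and
`s u + t v = 1`. If `s ≠ t` the lines meet in the single point `((1 - t) / (s - t), (s - 1) / (s - t))`,
which counts iff `s ≠ 1` and `t ≠ 1`; if `s = t` they coincide or are disjoint. -/
theorem sum_two_lines (s t : Fˣ) :
    ∑ u : Fˣ, ∑ v : Fˣ, ((if (u : F) + v = 1 then (1 : ℤ) else 0)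
        * if (u : F) * s + v * t = 1 then 1 else 0)
      = 1 - (if s = 1 then 1 else 0) - (if t = 1 then 1 else 0) - (if s = t then 1 else 0)
        + Fintype.card F * (if s = 1 ∧ t = 1 then 1 else 0) := by
  by_cases hst : s = t
  · subst hst
    by_cases hs : s = 1
    · subst hs
      have : ∀ u v : Fˣ, ((if (u : F) + v = 1 then (1 : ℤ) else 0)
          * if (u : F) * (1 : Fˣ) + v * (1 : Fˣ) = 1 then 1 else 0)
          = if (u : F) + v = 1 then (1 : ℤ) else 0 := by
        intro u v; by_cases h : (u : F) + v = 1 <;> simp [h]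
      simp only [this, sum_units_add_eq_one]
      simp; ring
    · rw [Finset.sum_eq_zero]
      · simp [hs]
      · refine fun u _ => Finset.sum_eq_zero fun v _ => ?_
        by_cases h : (u : F) + v = 1
        · rw [← add_mul, h, one_mul]; simp [hs]
        · simp [h]
  · have hst' : (s : F) - t ≠ 0 := fun h => hst (Units.ext (sub_eq_zero.1 h))
    have hsol : ∀ u v : F, u + v = 1 → u * s + v * t = 1 →
        u * (s - t) = 1 - t ∧ v * (s - t) = s - 1 := by
      intro u v h1 h2
      constructor
      · linear_combination h2 - t * h1
      · linear_combination s * h1 - h2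
    by_cases hs : s = 1
    · have ht : t ≠ 1 := fun h => hst (hs.trans h.symm)
      rw [Finset.sum_eq_zero]
      · simp [hs, ht, Ne.symm ht]
      · refine fun u _ => Finset.sum_eq_zero fun v _ => ?_
        rw [mul_eq_zero]
        by_contra! hcon
        simp only [ne_eq, ite_eq_right_iff, one_ne_zero, imp_false, not_not] at hcon
        have := (hsol u v hcon.1 hcon.2).2
        rw [hs] at this hst'
        simp at this
        exact hst' (by simpa using this)
    · by_cases ht : t = 1
      · rw [Finset.sum_eq_zero]
        · simp [hs, ht]
        · refine fun u _ => Finset.sum_eq_zero fun v _ => ?_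
          rw [mul_eq_zero]
          by_contra! hcon
          simp only [ne_eq, ite_eq_right_iff, one_ne_zero, imp_false, not_not] at hcon
          have := (hsol u v hcon.1 hcon.2).1
          rw [ht] at this hst'
          simp at this
          exact hst' (by simpa using this)
      · have h1 : (1 - (t : F)) / (s - t) ≠ 0 :=
          div_ne_zero (fun h => ht (Units.ext (by simpa using (sub_eq_zero.1 h).symm))) hst'
        have h2 : ((s : F) - 1) / (s - t) ≠ 0 :=
          div_ne_zero (fun h => hs (Units.ext (by simpa using (sub_eq_zero.1 h)))) hst'
        rw [Finset.sum_eq_single (Units.mk0 _ h1), Finset.sum_eq_single (Units.mk0 _ h2)]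
        · have e1 : (1 - (t : F)) / (s - t) + ((s : F) - 1) / (s - t) = 1 := by
            field_simp; ring
          have e2 : (1 - (t : F)) / (s - t) * s + ((s : F) - 1) / (s - t) * t = 1 := by
            field_simp; ring
          simp only [Units.val_mk0, e1, e2]
          simp [hs, ht, hst]
        · intro v _ hv
          rw [mul_eq_zero]
          by_contra! hcon
          simp only [ne_eq, ite_eq_right_iff, one_ne_zero, imp_false, not_not] at hcon
          exact hv (Units.ext (by
            rw [Units.val_mk0, eq_div_iff hst']; exact (hsol _ _ hcon.1 hcon.2).2))
        · simp
        · intro u _ hu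
          refine Finset.sum_eq_zero fun v _ => ?_
          rw [mul_eq_zero]
          by_contra! hcon
          simp only [ne_eq, ite_eq_right_iff, one_ne_zero, imp_false, not_not] at hcon
          exact hu (Units.ext (by
            rw [Units.val_mk0, eq_div_iff hst']; exact (hsol _ _ hcon.1 hcon.2).1))
        · simp

/-- The second moment of the number of `p` with `u φ(p) + v ψ(p) = 1`, over all units `u`, `v`. -/
theorem sum_sq_eq {H : Type*} [Group H] [Fintype H] (φ ψ : H →* Fˣ) :
    ∑ u : Fˣ, ∑ v : Fˣ, (∑ p : H, if ((u * φ p : Fˣ) : F) + (v * ψ p : Fˣ) = 1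
        then (1 : ℤ) else 0) ^ 2
      = Fintype.card H * ∑ r : H, ((1 : ℤ) - (if φ r = 1 then 1 else 0) - (if ψ r = 1 then 1 else 0)
        - (if φ r = ψ r then 1 else 0)
        + Fintype.card F * (if φ r = 1 ∧ ψ r = 1 then 1 else 0)) := by
  have swap : ∀ T : Fˣ → Fˣ → H → H → ℤ, ∑ u, ∑ v, ∑ p, ∑ r, T u v p r
      = ∑ p, ∑ r, ∑ u, ∑ v, T u v p r := by
    intro T
    have := Finset.sum_comm (s := Finset.univ) (t := Finset.univ)
      (f := fun (x : Fˣ × Fˣ) (y : H × H) => T x.1 x.2 y.1 y.2)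
    simpa only [Fintype.sum_prod_type] using this
  simp only [sq, Finset.sum_mul_sum]
  rw [swap]
  have inner : ∀ p : H, ∑ r : H, ∑ u : Fˣ, ∑ v : Fˣ,
      (if ((u * φ p : Fˣ) : F) + (v * ψ p : Fˣ) = 1 then (1 : ℤ) else 0)
        * (if ((u * φ r : Fˣ) : F) + (v * ψ r : Fˣ) = 1 then (1 : ℤ) else 0)
      = ∑ r : H, ((1 : ℤ) - (if φ r = 1 then 1 else 0) - (if ψ r = 1 then 1 else 0)
        - (if φ r = ψ r then 1 else 0)
        + Fintype.card F * (if φ r = 1 ∧ ψ r = 1 then 1 else 0)) := by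
    intro p
    refine (Fintype.sum_equiv (Equiv.mulLeft p) _ _ fun r => ?_).symm
    rw [← sum_two_lines]
    refine (Fintype.sum_equiv (Equiv.mulRight (φ p)) _ _ fun u => ?_).symm
    refine Fintype.sum_equiv (Equiv.mulRight (ψ p)) _ _ fun v => ?_
    simp only [Equiv.coe_mulRight, Equiv.coe_mulLeft, map_mul, Units.val_mul, mul_assoc]
    -- The two sides differ only in the decidability instances.
    congr
  rw [Finset.sum_congr rfl fun p _ => inner p, Finset.sum_const, Finset.card_univ, nsmul_eq_mul]

end Field

theorem sum_range_generator {G : Type*} [Group G] [Fintype G] (ρ : G)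
    (hρ : ∀ x : G, x ∈ Subgroup.zpowers ρ) (g : G → ℤ) :
    ∑ i ∈ Finset.range (Fintype.card G), g (ρ ^ (i : ℤ)) = ∑ u : G, g u := by
  classical
  rw [← IsCyclic.image_range_card hρ, Finset.sum_image, Nat.card_eq_fintype_card]
  · simp
  · rw [← orderOf_eq_card_of_forall_mem_zpowers hρ]
    intro i hi j hj h
    exact pow_injOn_Iio_orderOf (by simpa using hi) (by simpa using hj) h

/-- The monomial `(x, y) ↦ x ^ a * y ^ b` as a homomorphism. -/
def monomialHom {G : Type*} [CommGroup G] (a b : ℤ) : G × G →* G where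
  toFun p := p.1 ^ a * p.2 ^ b
  map_one' := by simp
  map_mul' p r := by
    simp only [Prod.fst_mul, Prod.snd_mul, mul_zpow]
    exact mul_mul_mul_comm _ _ _ _



/-- The double sum of |C*_{ij}|² over 0 ≤ i, j ≤ q-2 equals (q-1)²·[(q-1)² - (q-1)(d+e+f) + q·k]. -/
theorem trinomial_sum_card_sq {p n q : ℕ} (hp : p.Prime) (hn : 0 < n) (hq : q = p ^ n)
    {F : Type*} [Field F] [Fintype F] (hF : Fintype.card F = q)
    (ρ : Fˣ) (hρ : ∀ x : Fˣ, x ∈ Subgroup.zpowers ρ)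
    (a11 a12 a21 a22 a31 a32 : ℕ)
    (b11 b12 b21 b22 : ℤ)
    (hb11 : b11 = (a11 : ℤ) - (a31 : ℤ)) (hb12 : b12 = (a12 : ℤ) - (a32 : ℤ))
    (hb21 : b21 = (a21 : ℤ) - (a31 : ℤ)) (hb22 : b22 = (a22 : ℤ) - (a32 : ℤ))
    (hdet : b11 * b22 - b12 * b21 ≠ 0)
    (d e f k w : ℤ)
    (hd : d = Int.gcd b11 (Int.gcd b12 ((q : ℤ) - 1)))
    (he : e = Int.gcd b21 (Int.gcd b22 ((q : ℤ) - 1)))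
    (hf : f = Int.gcd (b11 - b21) (Int.gcd (b12 - b22) ((q : ℤ) - 1)))
    (hk : k = Int.gcd (((q : ℤ) - 1) * (Int.gcd d (Int.gcd e f) : ℕ))
      (b11 * b22 - b12 * b21))
    (hw : w = if Even q then 0 else ((q : ℤ) - 1) / 2)
    (D : ℤ → ℤ → ℤ) (hD : ∀ ℓ i : ℤ, D ℓ i = if ℓ ∣ i then ℓ else 0)
    (C : ℤ → ℤ → ℕ)
    (hC : ∀ i j : ℤ, C i j = Nat.card {xy : Fˣ × Fˣ //
      ((ρ ^ i : Fˣ) : F) * (xy.1 : F) ^ a11 * (xy.2 : F) ^ a12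
        + ((ρ ^ j : Fˣ) : F) * (xy.1 : F) ^ a21 * (xy.2 : F) ^ a22
        = (xy.1 : F) ^ a31 * (xy.2 : F) ^ a32})
    (N : ℤ → ℤ → ℤ)
    (hN : ∀ i j : ℤ, N i j = (C i j : ℤ) - ((q : ℤ) + 1) + D d i + D e j + D f (i - j + w)) :
    (∑ i ∈ Finset.range (q - 1), ∑ j ∈ Finset.range (q - 1), ((C (i : ℤ) (j : ℤ) : ℤ)) ^ 2)
      = ((q : ℤ) - 1) ^ 2 * (((q : ℤ) - 1) ^ 2 - ((q : ℤ) - 1) * (d + e + f) + (q : ℤ) * k) := by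
  classical
  have hq1 : 1 ≤ q := hF ▸ Fintype.card_pos
  have hcard : Fintype.card Fˣ = q - 1 := by rw [Fintype.card_units, hF]
  have hcardZ : (Fintype.card Fˣ : ℤ) = (q : ℤ) - 1 := by
    rw [hcard, Nat.cast_sub hq1, Nat.cast_one]
  set φ : Fˣ × Fˣ →* Fˣ := monomialHom b11 b12 with hφ
  set ψ : Fˣ × Fˣ →* Fˣ := monomialHom b21 b22 with hψ
  set c : Fˣ → Fˣ → ℤ := fun u v => ∑ p : Fˣ × Fˣ,
    if ((u * φ p : Fˣ) : F) + (v * ψ p : Fˣ) = 1 then (1 : ℤ) else 0 with hc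
  have hCc : ∀ i j : ℤ, (C i j : ℤ) = c (ρ ^ i) (ρ ^ j) := by
    intro i j
    rw [hC, hc]
    simp only
    rw [Finset.sum_boole, ← Fintype.card_subtype, ← Nat.card_eq_fintype_card]
    refine congrArg _ (Nat.card_congr (Equiv.subtypeEquivRight fun p => ?_))
    -- Factoring out the third monomial `z`, a unit, turns the exponents `a` into `b`.
    set z : Fˣ := p.1 ^ a31 * p.2 ^ a32 with hz
    have e1 : ρ ^ i * p.1 ^ a11 * p.2 ^ a12 = ρ ^ i * φ p * z := by
      simp only [hφ, hz, hb11, hb12, monomialHom, MonoidHom.coe_mk, OneHom.coe_mk, zpow_sub,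
        zpow_natCast]
      rw [mul_assoc, mul_assoc, mul_mul_mul_comm, inv_mul_cancel_right, inv_mul_cancel_right]
    have e2 : ρ ^ j * p.1 ^ a21 * p.2 ^ a22 = ρ ^ j * ψ p * z := by
      simp only [hψ, hz, hb21, hb22, monomialHom, MonoidHom.coe_mk, OneHom.coe_mk, zpow_sub,
        zpow_natCast]
      rw [mul_assoc, mul_assoc, mul_mul_mul_comm, inv_mul_cancel_right, inv_mul_cancel_right]
    have e1' := congrArg (Units.val (α := F)) e1
    have e2' := congrArg (Units.val (α := F)) e2
    have e3' := congrArg (Units.val (α := F)) hz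
    rw [Units.val_mul, Units.val_mul, Units.val_pow_eq_pow_val, Units.val_pow_eq_pow_val,
      Units.val_mul _ z] at e1' e2'
    rw [Units.val_mul, Units.val_pow_eq_pow_val, Units.val_pow_eq_pow_val] at e3'
    rw [e1', e2', ← e3', ← add_mul]
    exact mul_eq_right₀ z.ne_zero
  have hsum : (∑ i ∈ Finset.range (q - 1), ∑ j ∈ Finset.range (q - 1),
      ((C (i : ℤ) (j : ℤ) : ℤ)) ^ 2) = ∑ u : Fˣ, ∑ v : Fˣ, c u v ^ 2 := by
    rw [← hcard, ← sum_range_generator ρ hρ]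
    refine Finset.sum_congr rfl fun i _ => ?_
    rw [← sum_range_generator ρ hρ]
    exact Finset.sum_congr rfl fun j _ => by rw [hCc]
  have hd0 : b11 ≠ 0 ∨ b12 ≠ 0 := by
    by_contra! h; apply hdet; rw [h.1, h.2]; ring
  have he0 : b21 ≠ 0 ∨ b22 ≠ 0 := by
    by_contra! h; apply hdet; rw [h.1, h.2]; ring
  have hf0 : b11 - b21 ≠ 0 ∨ b12 - b22 ≠ 0 := by
    by_contra! h; apply hdet; linear_combination b22 * h.1 - b21 * h.2
  have S1 := sum_monomial_eq_one (G := Fˣ) b11 b12 hd0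
  have S2 := sum_monomial_eq_one (G := Fˣ) b21 b22 he0
  have S3 := sum_monomial_eq_one (G := Fˣ) (b11 - b21) (b12 - b22) hf0
  have K := sum_monomial_pair_eq_one (G := Fˣ) b11 b12 b21 b22 hd0
  rw [hcardZ] at S1 S2 S3 K
  rw [← hd] at S1
  rw [← he] at S2
  rw [← hf] at S3
  rw [← hd, ← he] at K
  -- `gcd(d, e)` already divides `f`, since it divides all entries of `B` and `q - 1`.
  have hdef : Int.gcd d (Int.gcd e f) = Int.gcd d e := by
    have hdvd : (Int.gcd d e : ℤ) ∣ f := by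
      have h1 : (Int.gcd d e : ℤ) ∣ d := Int.gcd_dvd_left ..
      have h2 : (Int.gcd d e : ℤ) ∣ e := Int.gcd_dvd_right ..
      nth_rw 2 [hd] at h1
      nth_rw 2 [he] at h2
      simp only [Int.dvd_coe_gcd_iff] at h1 h2
      rw [hf]
      simp only [Int.dvd_coe_gcd_iff]
      exact ⟨dvd_sub h1.1 h2.1, dvd_sub h1.2.1 h2.2.1, h1.2.2⟩
    rw [← Int.gcd_assoc]
    exact_mod_cast Int.gcd_eq_left (by positivity) hdvd
  rw [hdef] at hk
  rw [← hk] at K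
  have hquot : ∀ x y : Fˣ, x ^ b11 * y ^ b12 = x ^ b21 * y ^ b22
      ↔ x ^ (b11 - b21) * y ^ (b12 - b22) = 1 := by
    intro x y
    rw [← div_eq_one, zpow_sub, zpow_sub, div_eq_mul_inv, mul_inv, mul_mul_mul_comm]
  rw [hsum, hc, sum_sq_eq φ ψ, Fintype.card_prod, Nat.cast_mul, hcardZ, hF]
  simp only [Finset.sum_add_distrib, Finset.sum_sub_distrib, ← Finset.mul_sum,
    Fintype.sum_prod_type, hφ, hψ, monomialHom, MonoidHom.coe_mk, OneHom.coe_mk, hquot]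
  rw [S1, S2, S3, K]
  simp only [Finset.sum_const, Finset.card_univ, nsmul_eq_mul, hcardZ]
  ring
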